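/- For every term α ∈ T: (1) tp(α) = 0 if and only if α = 0; (2) if tp(α) = 1 then α = α[0]+1; (3) if x < tp(α) then α[x] < α; (4) if x < y < tp(α) then α[x] < α[y]. -/

import Mathlib

set_option maxHeartbeats 1000000

attribute [local instance] Classical.propDecidable

/-- Raw terms of the system `T`: `0`, `1`, `ψᵢ a` and (right-nested) sums `a + b`. -/
inductive Tm : Type where
  | zero : Tm
  | one  : Tm
  | psi  : ℕ → Tm → Tm
  | add  : Tm → Tm → Tm
deriving DecidableEq

instance : Nonempty Tm := ⟨Tm.zero⟩

/-- Head (first summand) of a term. -/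
def Tm.hd : Tm → Tm
  | .add a _ => a
  | t => t

/-- Tail (remaining summands) of a term. -/
def Tm.tl : Tm → Tm
  | .add _ b => b
  | _ => .zero

/-- Whether a term is a genuine sum. -/
def Tm.isAdd : Tm → Prop
  | .add _ _ => True
  | _ => False

/-- The comparison relation `<` on terms of `T`. -/
inductive TLt : Tm → Tm → Prop where
  | zero_lt {a : Tm} : a ≠ Tm.zero → TLt Tm.zero a
  | one_lt_psi0 {a : Tm} : TLt Tm.one (Tm.psi 0 a)
  | psi_mono {i : ℕ} {a b : Tm} : TLt a b → TLt (Tm.psi i a) (Tm.psi i b)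
  | psi_lt {i j : ℕ} {a b : Tm} : i < j → TLt (Tm.psi i a) (Tm.psi j b)
  | lex_hd {a b : Tm} : (Tm.isAdd a ∨ Tm.isAdd b) → TLt (Tm.hd a) (Tm.hd b) → TLt a b
  | lex_tl {a b : Tm} : (Tm.isAdd a ∨ Tm.isAdd b) → Tm.hd a = Tm.hd b →
      TLt (Tm.tl a) (Tm.tl b) → TLt a b

/-- `≤` on terms. -/
def TLe (a b : Tm) : Prop := TLt a b ∨ a = b

/-- Addition of terms: summands of the left argument smaller than the head of the
right argument are discarded. -/
noncomputable def Tm.addT : Tm → Tm → Tm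
  | .zero, b => b
  | a, .zero => a
  | .add p r, b => if TLt p (Tm.hd b) then b else Tm.add p (Tm.addT r b)
  | a, b => if TLt a (Tm.hd b) then b else Tm.add a b

/-- The term representing a natural number. -/
def natToTm : ℕ → Tm
  | 0 => .zero
  | 1 => .one
  | n + 2 => Tm.add Tm.one (natToTm (n + 1))

/-- The natural number represented by a (numeral) term. -/
def tmToNat : Tm → ℕ
  | .zero => 0
  | .one => 1
  | .psi _ _ => 0
  | .add a b => tmToNat a + tmToNat b

/-- Multiplication of a (principal) term by a natural number. -/
noncomputable def mulNat (a : Tm) : ℕ → Tm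
  | 0 => .zero
  | n + 1 => Tm.addT (mulNat a n) a

/-- Principal terms: `1` and the `ψᵢ`-terms. -/
def Tm.IsPrincipal : Tm → Prop
  | .one => True
  | .psi _ _ => True
  | _ => False

/-- The well-formed terms of the system `T`. -/
inductive InT : Tm → Prop where
  | zero : InT .zero
  | one : InT .one
  | psi {i : ℕ} {a : Tm} : i < 3 → InT a → InT (.psi i a)
  | add {a b : Tm} : Tm.IsPrincipal a → InT a → InT b → b ≠ .zero →
      TLe (Tm.hd b) a → InT (.add a b)

/-- `ω := ψ₀0`. -/
def omegaT : Tm := .psi 0 .zero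
/-- `Ω := ψ₁0`. -/
def OmegaT : Tm := .psi 1 .zero
/-- `Ω₂ := ψ₂0`. -/
def Omega2T : Tm := .psi 2 .zero

/-- The type `tp(α)` of a term. -/
def tp : Tm → Tm
  | .zero => .zero
  | .one => .one
  | .add _ b => tp b
  | .psi i a =>
    if tp a = Tm.zero then Tm.psi i Tm.zero
    else if tp a = Tm.one then omegaT
    else if (i = 0 ∧ tp a = OmegaT) ∨ (i = 1 ∧ tp a = Omega2T) then omegaT
    else tp a

/-- The fundamental sequence `α[x]` of a term `α` at index `x`. -/
noncomputable def fund : Tm → Tm → Tm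
  | .zero, _ => .zero
  | .one, _ => .zero
  | .add a b, x => Tm.addT a (fund b x)
  | .psi i a, x =>
    if tp a = Tm.zero then x
    else if tp a = Tm.one then mulNat (Tm.psi i (fund a Tm.zero)) (tmToNat x)
    else if i = 0 ∧ tp a = OmegaT then
      Tm.psi 0 (fund a (Nat.rec (motive := fun _ => Tm) Tm.zero
        (fun _ ih => Tm.psi 0 (fund a ih)) (tmToNat x)))
    else if i = 1 ∧ tp a = Omega2T then
      Tm.psi 1 (fund a (Nat.rec (motive := fun _ => Tm) Tm.zero
        (fun _ ih => Tm.psi 1 (fund a ih)) (tmToNat x)))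
    else Tm.psi i (fund a x)
termination_by t _ => sizeOf t
decreasing_by all_goals simp

/-- The finite set `G₁(α)`. -/
def G1 : Tm → Finset Tm
  | .zero => ∅
  | .one => ∅
  | .psi 0 _ => ∅
  | .psi 1 b => insert b (G1 b)
  | .psi 2 b => G1 b
  | .psi (_ + 3) _ => ∅
  | .add a b => G1 a ∪ G1 b

/-- The finite set `G₀(α)`. -/
def G0 : Tm → Finset Tm
  | .zero => ∅
  | .one => ∅
  | .psi 0 b => insert b (G0 b)
  | .psi 1 b => G0 b
  | .psi 2 b => G0 b
  | .psi (_ + 3) _ => ∅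
  | .add a b => G0 a ∪ G0 b

/-- The well-founded subsystem `OT ⊆ T`. -/
inductive InOT : Tm → Prop where
  | zero : InOT .zero
  | one : InOT .one
  | psi2 {b : Tm} : InOT b → InOT (.psi 2 b)
  | add {a b : Tm} : InT (.add a b) → InOT a → InOT b → InOT (.add a b)
  | psi1 {b : Tm} : InOT b → (∀ γ ∈ G1 b, TLt γ b) → InOT (.psi 1 b)
  | psi0 {b : Tm} : InOT b → (∀ γ ∈ G0 b, TLt γ b) → TLt b Omega2T → InOT (.psi 0 b)

/-- The norm `N(α)`. -/
def normN : Tm → ℕ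
  | .zero => 0
  | .one => 1
  | .psi _ b => 1 + normN b
  | .add a b => normN a + normN b

/-- `OT₀ := {α ∈ OT : α < ψ₁Ω₂ and G₀α < ψ₁Ω₂}`. -/
def InOT0 (a : Tm) : Prop :=
  InOT a ∧ TLt a (Tm.psi 1 Omega2T) ∧ ∀ γ ∈ G0 a, TLt γ (Tm.psi 1 Omega2T)

/-- Single-step descent: `b = a[x]` for some term `x ≤ n`. -/
def stepLe (n : ℕ) (b a : Tm) : Prop := ∃ x : Tm, TLe x (natToTm n) ∧ b = fund a x

/-- `a <ₙ b` : transitive closure of single-step descent. -/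
def ltN (n : ℕ) (a b : Tm) : Prop := Relation.TransGen (stepLe n) a b

/-- `a ≤ₙ b` : reflexive transitive closure of single-step descent. -/
def leN (n : ℕ) (a b : Tm) : Prop := Relation.ReflTransGen (stepLe n) a b

mutual
/-- Graph of the Hardy hierarchy: `HRel α k n` means `H_α(k) = n`. -/
inductive HRel : Tm → ℕ → ℕ → Prop where
  | zero {k : ℕ} : HRel Tm.zero k k
  | succ {α : Tm} {k n : ℕ} : tp α = Tm.one → HRel (fund α Tm.zero) k n →
      HRel α k (n * k)
  | lim {α β : Tm} {k n : ℕ} : tp α = omegaT → HIter α k k β → HRel β k n →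
      HRel α k n

/-- Graph of the iteration `α{b}`: `HIter α k b β` means `α{b} = β`
(where `α{0} = α[0]` and `α{b+1} = α[H_(α{b})(k)]`). -/
inductive HIter : Tm → ℕ → ℕ → Tm → Prop where
  | zero {α : Tm} {k : ℕ} : HIter α k 0 (fund α Tm.zero)
  | succ {α β : Tm} {k b n : ℕ} : HIter α k b β → HRel β k n →
      HIter α k (b + 1) (fund α (natToTm n))
end

/-- The Hardy function `H_α(k)`. -/
noncomputable def H (α : Tm) (k : ℕ) : ℕ := sInf {n | HRel α k n}

/-- The (unique, when it exists) ordinal term of the `k`-normal form of `m`: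
the maximal `α ∈ OT₀ ∩ Ω` with `H_α(k) ≤ m`. -/
noncomputable def nfAlpha (k m : ℕ) : Tm :=
  Classical.epsilon fun α =>
    InOT0 α ∧ TLt α OmegaT ∧ H α k ≤ m ∧
      ∀ β : Tm, InOT0 β → TLt β OmegaT → TLt α β → m < H β k

theorem tmToNat_le_normN (t : Tm) : tmToNat t ≤ normN t := by
  induction t with
  | zero => simp [tmToNat, normN]
  | one => simp [tmToNat, normN]
  | psi i a ih => simp [tmToNat, normN]
  | add a b iha ihb => simp only [tmToNat, normN]; omega

mutual
/-- Base change `α[k ← k+1]` on terms. -/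
noncomputable def bcT (k : ℕ) : Tm → Tm
  | .zero => .zero
  | .one => .one
  | .psi i a => .psi i (bcT k a)
  | .add a b =>
      if a = Tm.one then natToTm (bcN k (tmToNat (Tm.add a b)))
      else if h : 0 < normN a ∧ 0 < normN b then Tm.add (bcT k a) (bcT k b)
      else Tm.zero
termination_by a => 2 * normN a + 1
decreasing_by
  all_goals simp only [normN]
  · omega
  · have := tmToNat_le_normN (Tm.add a b); simp only [normN] at this ⊢; omega
  · omega
  · omega

/-- Base change `m[k ← k+1]` on natural numbers. -/
noncomputable def bcN (k m : ℕ) : ℕ :=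
  if h1 : m < k then m
  else if h2 : m = k then k + 1
  else if hg : normN (nfAlpha k m) < m ∧ 0 < H (nfAlpha k m) k ∧ H (nfAlpha k m) k ≤ m then
    H (bcT k (nfAlpha k m)) (k + 1) * (m / H (nfAlpha k m) k) + bcN k (m % H (nfAlpha k m) k)
  else 0
termination_by 2 * m
decreasing_by
  · omega
  · have := Nat.mod_lt m (y := H (nfAlpha k m) k) hg.2.1; omega
end

mutual
/-- The ordinal assignment `o_k` on terms of `OT₀`. -/
noncomputable def oT (k : ℕ) : Tm → Tm
  | .zero => .zero
  | .one => .one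
  | .psi 0 b => .psi 1 (oT k b)
  | .psi 1 b => .psi 2 (oT k b)
  | .psi (_ + 2) _ => .zero
  | .add a b =>
      if a = Tm.one then oN k (tmToNat (Tm.add a b))
      else if h : 0 < normN a ∧ 0 < normN b then Tm.addT (oT k a) (oT k b)
      else Tm.zero
termination_by a => 2 * normN a + 1
decreasing_by
  all_goals simp only [normN]
  · omega
  · omega
  · have := tmToNat_le_normN (Tm.add a b); simp only [normN] at this ⊢; omega
  · omega
  · omega

/-- The ordinal assignment `o_k` on natural numbers. -/
noncomputable def oN (k m : ℕ) : Tm :=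
  if h1 : m < k then natToTm m
  else if h2 : m = k then omegaT
  else if hg : normN (nfAlpha k m) < m ∧ 0 < H (nfAlpha k m) k ∧ H (nfAlpha k m) k ≤ m then
    Tm.addT (Tm.psi 0 (oT k (nfAlpha k m))) (oN k (m - H (nfAlpha k m) k))
  else Tm.zero
termination_by 2 * m
decreasing_by
  · omega
  · omega
end

/-- Ordinal contexts: a term with a single hole, either replacing a summand
(`ξ + ⟦·⟧ + η`) or nested under collapsing functions (`ξ + ψᵢ(μ⟦·⟧) + η`). -/
inductive Ctx : Type where
  | base : Tm → Tm → Ctx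
  | psiC : Tm → ℕ → Ctx → Tm → Ctx

/-- Filling the hole of a context with a term. -/
noncomputable def Ctx.fill : Ctx → Tm → Tm
  | .base ξ η, γ => Tm.addT (Tm.addT ξ γ) η
  | .psiC ξ i μ η, γ => Tm.addT (Tm.addT ξ (Tm.psi i (Ctx.fill μ γ))) η

/-- The truncated context `λ⁻⟦·⟧`: all summands following the hole are removed,
at every level. -/
def Ctx.trunc : Ctx → Ctx
  | .base ξ _ => .base ξ Tm.zero
  | .psiC ξ i μ _ => .psiC ξ i (Ctx.trunc μ) Tm.zero

/-- A context is valid if only `ψ₀` and `ψ₁` occur on the path to the hole. -/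
def Ctx.Valid : Ctx → Prop
  | .base _ _ => True
  | .psiC _ i μ _ => i ≤ 1 ∧ Ctx.Valid μ

/-- A context is `ψ₀`-nesting free if its hole is not in the scope of a `ψ₀`. -/
def Ctx.NestFree : Ctx → Prop
  | .base _ _ => True
  | .psiC _ i μ _ => i = 1 ∧ Ctx.NestFree μ

namespace TFB

theorem pp (i : ℕ) (a : Tm) : (Tm.psi i a).IsPrincipal := trivial

theorem p1 : Tm.one.IsPrincipal := trivial

/-- weak well-formedness -/
inductive InW : Tm → Prop where
  | zero : InW .zero
  | one : InW .one
  | psi {i : ℕ} {a : Tm} : InW a → InW (.psi i a)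
  | add {a b : Tm} : Tm.IsPrincipal a → InW a → InW b → b ≠ .zero → InW (.add a b)

theorem InW.of {a : Tm} (h : InT a) : InW a := by
  induction h with
  | zero => exact .zero
  | one => exact .one
  | psi _ _ ih => exact .psi ih
  | add hp _ _ hb _ iha ihb => exact .add hp iha ihb hb

theorem not_lt_zero {a b : Tm} (h : TLt a b) : b ≠ Tm.zero := by
  induction h with
  | zero_lt h => exact h
  | one_lt_psi0 => simp
  | psi_mono _ _ => simp
  | psi_lt _ => simp
  | @lex_hd a b h _ ih => rintro rfl; exact ih rfl
  | @lex_tl a b h _ _ ih => rintro rfl; exact ih rfl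

theorem not_lt_zero' {a : Tm} (h : TLt a Tm.zero) : False := not_lt_zero h rfl

theorem irr_aux {a b : Tm} (h : TLt a b) : a ≠ b := by
  induction h with
  | zero_lt h => exact h.symm
  | one_lt_psi0 => simp
  | psi_mono _ ih => simpa using ih
  | psi_lt h => simp; omega
  | lex_hd h _ ih => rintro rfl; exact ih rfl
  | lex_tl h _ _ ih => rintro rfl; exact ih rfl

theorem irr {a : Tm} (h : TLt a a) : False := irr_aux h rfl

/-- string code -/
def code : Tm → List ℕ
  | .zero => []
  | .one => [1]
  | .psi i a => (i + 2) :: (code a ++ [0])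
  | .add a b => code a ++ code b

theorem code_hd_tl (a : Tm) : code a = code a.hd ++ code a.tl := by
  cases a <;> simp [code, Tm.hd, Tm.tl]

theorem prin_code {a : Tm} (h : a.IsPrincipal) : ∃ c l, code a = (c + 1) :: l := by
  cases a with
  | zero => exact h.elim
  | one => exact ⟨0, [], rfl⟩
  | psi i a => exact ⟨i + 1, _, rfl⟩
  | add a b => exact h.elim

theorem code_pos {a : Tm} (h : InW a) (h0 : a ≠ .zero) : ∃ c l, code a = (c + 1) :: l := by
  cases h with
  | zero => exact absurd rfl h0
  | one => exact prin_code trivial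
  | psi _ => exact prin_code trivial
  | add hp _ _ _ =>
    obtain ⟨c, l, h⟩ := prin_code hp
    exact ⟨c, _, by simp only [code, h]; rfl⟩

theorem hd_prin {a : Tm} (h : InW a) (h0 : a ≠ .zero) : a.hd.IsPrincipal := by
  cases h with
  | zero => exact absurd rfl h0
  | one => trivial
  | psi _ => trivial
  | add hp _ _ _ => exact hp

theorem hd_InW {a : Tm} (h : InW a) : InW a.hd := by
  cases h with
  | zero => exact .zero
  | one => exact .one
  | psi h => exact .psi h
  | add hp h _ _ => exact h

theorem tl_InW {a : Tm} (h : InW a) : InW a.tl := by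
  cases h with
  | zero => exact .zero
  | one => exact .zero
  | psi h => exact .zero
  | add hp _ h _ => exact h

theorem append_lt (l : List ℕ) {s t : List ℕ} (h : s < t) : l ++ s < l ++ t := by
  induction l with
  | nil => exact h
  | cons a l ih => exact List.Lex.cons ih

theorem code_lt {a b : Tm} (h : TLt a b) : InW a → InW b →
    (∀ s t, code a ++ 0 :: s < code b ++ 0 :: t) ∧
    (a.IsPrincipal → b.IsPrincipal → ∀ s t, code a ++ s < code b ++ t) := by
  induction h with
  | zero_lt h =>
    intro _ hb
    refine ⟨fun s t => ?_, fun h => h.elim⟩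
    obtain ⟨c, l, e⟩ := code_pos hb h
    rw [e]
    exact List.Lex.rel (by omega)
  | one_lt_psi0 =>
    intro _ _
    exact ⟨fun s t => List.Lex.rel (by omega), fun _ _ s t => List.Lex.rel (by omega)⟩
  | @psi_mono i a b _ ih =>
    intro ha hb
    cases ha with | psi ha =>
    cases hb with | psi hb =>
    have : ∀ s t, code (.psi i a) ++ s < code (.psi i b) ++ t := by
      intro s t
      simp only [code, List.cons_append, List.append_assoc]
      exact List.Lex.cons ((ih ha hb).1 _ _)
    exact ⟨fun s t => this _ _, fun _ _ => this⟩
  | psi_lt h =>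
    intro _ _
    exact ⟨fun s t => List.Lex.rel (by omega), fun _ _ s t => List.Lex.rel (by omega)⟩
  | @lex_hd a b h hl ih =>
    intro ha hb
    have hb0 : b ≠ .zero := by rintro rfl; exact not_lt_zero hl rfl
    constructor
    · intro s t
      by_cases ha0 : a = .zero
      · subst ha0
        obtain ⟨c, l, e⟩ := code_pos hb hb0
        rw [e]
        exact List.Lex.rel (by omega)
      · rw [code_hd_tl a, code_hd_tl b, List.append_assoc, List.append_assoc]
        exact (ih (hd_InW ha) (hd_InW hb)).2 (hd_prin ha ha0) (hd_prin hb hb0) _ _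
    · intro h1 h2
      cases a <;> cases b <;> simp_all [Tm.IsPrincipal, Tm.isAdd]
  | @lex_tl a b h he hl ih =>
    intro ha hb
    constructor
    · intro s t
      rw [code_hd_tl a, code_hd_tl b, List.append_assoc, List.append_assoc, he]
      exact append_lt _ ((ih (tl_InW ha) (tl_InW hb)).1 _ _)
    · intro h1 h2
      cases a <;> cases b <;> simp_all [Tm.IsPrincipal, Tm.isAdd]

/-- order through codes -/
def CLt (a b : Tm) : Prop := code a ++ [0] < code b ++ [0]

theorem CLt.of {a b : Tm} (h : TLt a b) (ha : InW a) (hb : InW b) : CLt a b :=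
  (code_lt h ha hb).1 [] []

theorem CLt.trans {a b c : Tm} (h : CLt a b) (h' : CLt b c) : CLt a c := lt_trans h h'

theorem no_discard {p b f : Tm} (hp : p.IsPrincipal) (hpW : InW p) (hb : InW b) (hb0 : b ≠ .zero)
    (hf : InW f) (hbp : TLe b.hd p) (hlt : CLt f b) : ¬ TLt p f.hd := by
  intro h
  have hf0 : f ≠ .zero := by rintro rfl; exact not_lt_zero' h
  have h1 := (code_lt h hpW (hd_InW hf)).2 hp (hd_prin hf hf0)
  have h2 : ∀ s t, code b.hd ++ s < code f.hd ++ t := by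
    intro s t
    rcases hbp with h' | h'
    · exact lt_trans ((code_lt h' (hd_InW hb) hpW).2 (hd_prin hb hb0) hp s []) (h1 [] t)
    · rw [h']; exact h1 s t
  have h3 : code b ++ [0] < code f ++ [0] := by
    rw [code_hd_tl b, code_hd_tl f, List.append_assoc, List.append_assoc]
    exact h2 _ _
  exact lt_asymm h3 hlt

/-- `p + f` without discarding -/
noncomputable def sm (p f : Tm) : Tm := if f = .zero then p else .add p f

theorem addT_zero (p : Tm) : p.addT .zero = p := by
  cases p <;> simp [Tm.addT]

theorem addT_eq_sm {p f : Tm} (hp : p.IsPrincipal) (h : ¬ TLt p f.hd) : p.addT f = sm p f := by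
  unfold sm
  split_ifs with h0
  · rw [h0, addT_zero]
  · cases p with
    | zero => exact hp.elim
    | add a b => exact hp.elim
    | one => cases f <;> simp_all [Tm.addT]
    | psi i a => cases f <;> simp_all [Tm.addT]

theorem addT_add {p r b : Tm} (h0 : b ≠ .zero) (h : ¬ TLt p b.hd) :
    (Tm.add p r).addT b = .add p (r.addT b) := by
  cases b <;> simp_all [Tm.addT]

theorem addT_ne {a b : Tm} (hb : b ≠ .zero) : a.addT b ≠ .zero := by
  cases a <;> cases b <;> simp_all [Tm.addT] <;> split_ifs <;> simp

theorem addT_InW {a b : Tm} (ha : InW a) (hb : InW b) : InW (a.addT b) := by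
  by_cases hb0 : b = .zero
  · rw [hb0, addT_zero]; exact ha
  induction ha with
  | zero => simpa [Tm.addT] using hb
  | one =>
    by_cases h : TLt .one b.hd
    · have : Tm.one.addT b = b := by cases b <;> simp_all [Tm.addT]
      rwa [this]
    · rw [addT_eq_sm p1 h, sm, if_neg hb0]; exact .add trivial .one hb hb0
  | @psi i a ha ih =>
    by_cases h : TLt (.psi i a) b.hd
    · have : (Tm.psi i a).addT b = b := by cases b <;> simp_all [Tm.addT]
      rwa [this]
    · rw [addT_eq_sm (pp _ _) h, sm, if_neg hb0]; exact .add trivial (.psi ha) hb hb0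
  | @add p r hp hpW hr hr0 _ ih =>
    by_cases h : TLt p b.hd
    · have : (Tm.add p r).addT b = b := by cases b <;> simp_all [Tm.addT]
      rwa [this]
    · rw [addT_add hb0 h]; exact .add hp hpW ih (addT_ne hb0)

theorem sm_hd {p f : Tm} (hp : p.IsPrincipal) : (sm p f).hd = p := by
  unfold sm; split_ifs
  · cases p <;> simp_all [Tm.IsPrincipal, Tm.hd]
  · rfl

theorem sm_tl {p f : Tm} (hp : p.IsPrincipal) : (sm p f).tl = f := by
  unfold sm; split_ifs with h
  · cases p <;> simp_all [Tm.IsPrincipal, Tm.tl]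
  · rfl

theorem sm_lt {p f g : Tm} (hp : p.IsPrincipal) (h : TLt f g) : TLt (sm p f) (sm p g) := by
  refine .lex_tl (Or.inr ?_) ?_ ?_
  · rw [sm, if_neg (not_lt_zero h)]; trivial
  · rw [sm_hd hp, sm_hd hp]
  · rwa [sm_tl hp, sm_tl hp]

/-- `p · n` -/
noncomputable def rep (p : Tm) : ℕ → Tm
  | 0 => .zero
  | n + 1 => sm p (rep p n)

theorem rep_succ_ne {p : Tm} (hp : p.IsPrincipal) (n : ℕ) : rep p (n + 1) ≠ .zero := by
  rw [rep, sm]; split_ifs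
  · rintro rfl; exact hp.elim
  · simp

theorem hd_self {p : Tm} (hp : p.IsPrincipal) : p.hd = p := by
  cases p <;> simp_all [Tm.IsPrincipal, Tm.hd]

theorem prin_ne {p : Tm} (hp : p.IsPrincipal) : p ≠ .zero := by rintro rfl; exact hp.elim

theorem rep_addT {p : Tm} (hp : p.IsPrincipal) (n : ℕ) : (rep p n).addT p = rep p (n + 1) := by
  induction n with
  | zero => simp [rep, Tm.addT, sm]
  | succ n ih =>
    have hi : ¬ TLt p p.hd := by rw [hd_self hp]; exact irr
    rw [rep, rep, ← ih]
    by_cases h0 : rep p n = .zero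
    · rw [h0]
      have : Tm.zero.addT p = p := by simp [Tm.addT]
      rw [this]
      conv_lhs => rw [sm, if_pos rfl]
      exact addT_eq_sm hp hi
    · rw [sm, if_neg h0, addT_add (prin_ne hp) hi, sm, if_neg (addT_ne (prin_ne hp))]

theorem mulNat_eq {p : Tm} (hp : p.IsPrincipal) (n : ℕ) : mulNat p n = rep p n := by
  induction n with
  | zero => rfl
  | succ n ih => rw [mulNat, ih, rep_addT hp]

theorem rep_lt {p : Tm} (hp : p.IsPrincipal) {m n : ℕ} (h : m < n) : TLt (rep p m) (rep p n) := by
  induction m generalizing n with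
  | zero =>
    obtain ⟨n, rfl⟩ : ∃ k, n = k + 1 := ⟨n - 1, by omega⟩
    exact .zero_lt (rep_succ_ne hp n)
  | succ m ih =>
    obtain ⟨n, rfl⟩ : ∃ k, n = k + 1 := ⟨n - 1, by omega⟩
    exact sm_lt hp (ih (by omega))

theorem rep_lt_prin {p q : Tm} (hp : p.IsPrincipal) (hq : q.IsPrincipal) (h : TLt p q) (n : ℕ) :
    TLt (rep p n) q := by
  cases n with
  | zero => exact .zero_lt (prin_ne hq)
  | succ n =>
    by_cases h0 : rep p n = .zero
    · rw [rep, sm, if_pos h0]; exact h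
    · rw [rep, sm, if_neg h0]
      exact .lex_hd (Or.inl trivial) (by rw [hd_self hq]; exact h)

theorem rep_InW {p : Tm} (hp : p.IsPrincipal) (hW : InW p) (n : ℕ) : InW (rep p n) := by
  induction n with
  | zero => exact .zero
  | succ n ih =>
    rw [rep, sm]; split_ifs with h
    · exact hW
    · exact .add hp hW ih h

theorem natToTm_succ (n : ℕ) : natToTm (n + 1) = sm .one (natToTm n) := by
  cases n with
  | zero => simp [natToTm, sm]
  | succ n =>
    have : natToTm (n + 1) ≠ .zero := by cases n <;> simp [natToTm]
    rw [sm, if_neg this]; rfl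

theorem natToTm_eq (n : ℕ) : natToTm n = rep .one n := by
  induction n with
  | zero => rfl
  | succ n ih => rw [natToTm_succ, ih, rep]

theorem tmToNat_nat (n : ℕ) : tmToNat (natToTm n) = n := by
  induction n with
  | zero => rfl
  | succ n ih =>
    cases n with
    | zero => rfl
    | succ n => simp only [natToTm, tmToNat, ih]; omega

theorem lt_one {x : Tm} (h : TLt x .one) (hx : InW x) : x = .zero := by
  cases hx with
  | zero => rfl
  | one => exact (irr h).elim
  | psi _ =>
    cases h with
    | lex_hd h _ => simp [Tm.isAdd] at h
    | lex_tl h _ _ => simp [Tm.isAdd] at h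
  | @add p r hp _ _ _ =>
    cases h with
    | lex_hd _ h =>
      simp only [Tm.hd] at h
      cases p <;> simp only [Tm.IsPrincipal] at hp
      · exact (irr h).elim
      · cases h with
        | lex_hd h _ => simp [Tm.isAdd] at h
        | lex_tl h _ _ => simp [Tm.isAdd] at h
    | lex_tl _ _ h => exact (not_lt_zero' h).elim

theorem numeral {r : Tm} (hr : InT r) (h : TLe r.hd .one) : ∃ n, r = natToTm n := by
  induction hr with
  | zero => exact ⟨0, rfl⟩
  | one => exact ⟨1, rfl⟩
  | psi _ ha =>
    rcases h with h | h
    · exact absurd (lt_one h (.psi (InW.of ha))) (by simp [Tm.hd])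
    · simp [Tm.hd] at h
  | @add p b hp hpT hb hb0 hle _ ih =>
    have : p = .one := by
      rcases h with h | h
      · exact absurd (lt_one h (InW.of hpT)) (prin_ne hp)
      · exact h
    subst this
    obtain ⟨n, rfl⟩ := ih hle
    cases n with
    | zero => exact absurd rfl hb0
    | succ n => exact ⟨n + 2, rfl⟩

/-- good arguments -/
def G (x : Tm) : Prop := InT x ∨ ∃ i c, x = .psi i c ∧ InW c

theorem G.inW {x : Tm} (h : G x) : InW x := by
  rcases h with h | ⟨i, c, rfl, h⟩
  · exact .of h
  · exact .psi h

theorem psi_lt_omega {i : ℕ} {c : Tm} (h : TLt (.psi i c) omegaT) : False := by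
  cases h with
  | psi_mono h => exact not_lt_zero' h
  | psi_lt h => omega
  | lex_hd h _ => simp [Tm.isAdd, omegaT] at h
  | lex_tl h _ _ => simp [Tm.isAdd, omegaT] at h

theorem lt_omega {x : Tm} (hx : G x) (h : TLt x omegaT) : ∃ n, x = natToTm n := by
  rcases hx with hx | ⟨i, c, rfl, _⟩
  · apply numeral hx
    cases hx with
    | zero => exact Or.inl (.zero_lt (by simp))
    | one => exact Or.inr rfl
    | psi _ _ => exact (psi_lt_omega h).elim
    | @add p r hp _ _ _ _ =>
      cases h with
      | lex_hd _ h =>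
        simp only [Tm.hd] at h
        cases p <;> simp only [Tm.IsPrincipal] at hp
        · exact Or.inr rfl
        · exact (psi_lt_omega h).elim
      | lex_tl _ _ h => exact (not_lt_zero' h).elim
  · exact (psi_lt_omega h).elim

theorem lt_nat {x : Tm} (hx : G x) {n : ℕ} (h : TLt x (natToTm n)) :
    ∃ m, m < n ∧ x = natToTm m := by
  induction n generalizing x with
  | zero => exact (not_lt_zero' h).elim
  | succ n ih =>
    cases n with
    | zero => exact ⟨0, by omega, lt_one h hx.inW⟩
    | succ n =>
      by_cases h0 : x = .zero
      · exact ⟨0, by omega, h0⟩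
      have hh : x.hd = .one ∧ TLt x.tl (natToTm (n + 1)) := by
        cases h with
        | zero_lt _ => exact absurd rfl h0
        | lex_hd _ h =>
          exact absurd (lt_one h (hd_InW hx.inW)) (prin_ne (hd_prin hx.inW h0))
        | lex_tl _ h1 h2 => exact ⟨h1, h2⟩
      rcases hx with hx | ⟨i, c, rfl, _⟩
      · cases hx with
        | zero => exact absurd rfl h0
        | one => exact ⟨1, by omega, rfl⟩
        | psi _ _ => exact absurd hh.1 (by simp [Tm.hd])
        | @add p r hp _ hr hr0 _ =>
          obtain ⟨rfl, h2⟩ : p = .one ∧ TLt r (natToTm (n + 1)) := hh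
          obtain ⟨m, hm, rfl⟩ := ih (Or.inl hr) h2
          cases m with
          | zero => exact absurd rfl hr0
          | succ m => exact ⟨m + 2, by omega, rfl⟩
      · exact absurd hh.1 (by simp [Tm.hd])

theorem tp_zero_iff {a : Tm} (ha : InW a) : tp a = .zero ↔ a = .zero := by
  induction ha with
  | zero => simp [tp]
  | one => simp [tp]
  | psi h ih =>
    simp only [tp]
    split_ifs <;> simp_all [omegaT]
  | add _ _ _ h0 _ ih => simp [tp, ih, h0]

/-- iteration -/
noncomputable def zz (i : ℕ) (a : Tm) (n : ℕ) : Tm :=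
  Nat.rec (motive := fun _ => Tm) Tm.zero (fun _ ih => Tm.psi i (fund a ih)) n

theorem fund_InW {a : Tm} (ha : InW a) : ∀ x, InW x → InW (fund a x) := by
  induction ha with
  | zero => intro x _; rw [fund]; exact .zero
  | one => intro x _; rw [fund]; exact .zero
  | add hp hpW _ _ _ ih => intro x hx; rw [fund]; exact addT_InW hpW (ih x hx)
  | @psi i a h ih =>
    intro x hx
    have hz : ∀ j n, InW (zz j a n) := by
      intro j n
      induction n with
      | zero => exact .zero
      | succ n ihn => exact .psi (ih _ ihn)
    rw [fund]
    split_ifs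
    · exact hx
    · rw [mulNat_eq (pp _ _)]; exact rep_InW (pp _ _) (.psi (ih _ .zero)) _
    · exact .psi (ih _ (hz 0 _))
    · exact .psi (ih _ (hz 1 _))
    · exact .psi (ih _ hx)

theorem zz_G {a : Tm} (ha : InW a) (j n : ℕ) : G (zz j a n) ∧ InW (zz j a n) := by
  induction n with
  | zero => exact ⟨Or.inl .zero, .zero⟩
  | succ n ihn =>
    have := fund_InW ha _ ihn.2
    exact ⟨Or.inr ⟨_, _, rfl, this⟩, .psi this⟩

theorem zz_lt_tp {a : Tm} (j n : ℕ) : TLt (zz j a n) (.psi (j + 1) .zero) := by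
  cases n with
  | zero => exact .zero_lt (by simp)
  | succ n => exact .psi_lt (by omega)

/-- main property -/
def P34 (a : Tm) : Prop :=
  (∀ x, G x → TLt x (tp a) → TLt (fund a x) a) ∧
  (∀ x y, G x → G y → TLt x y → TLt y (tp a) → TLt (fund a x) (fund a y))

theorem zz_mono {a : Tm} (ha : InW a) (h : P34 a) {j : ℕ} (ht : tp a = .psi (j + 1) .zero)
    {m n : ℕ} (hmn : m < n) : TLt (zz j a m) (zz j a n) := by
  induction m generalizing n with
  | zero =>
    obtain ⟨n, rfl⟩ : ∃ k, n = k + 1 := ⟨n - 1, by omega⟩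
    exact .zero_lt (by simp [zz])
  | succ m ih =>
    obtain ⟨n, rfl⟩ : ∃ k, n = k + 1 := ⟨n - 1, by omega⟩
    refine .psi_mono (h.2 _ _ (zz_G ha j m).1 (zz_G ha j n).1 (ih (by omega)) ?_)
    rw [ht]; exact zz_lt_tp j n

/-- properties via numerals -/
theorem P34_of_nat {a : Tm} (ht : tp a = omegaT)
    (h1 : ∀ n, TLt (fund a (natToTm n)) a)
    (h2 : ∀ m n, m < n → TLt (fund a (natToTm m)) (fund a (natToTm n))) : P34 a := by
  constructor
  · intro x hx hl
    rw [ht] at hl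
    obtain ⟨n, rfl⟩ := lt_omega hx hl
    exact h1 n
  · intro x y hx hy hxy hl
    rw [ht] at hl
    obtain ⟨n, rfl⟩ := lt_omega hy hl
    obtain ⟨m, hm, rfl⟩ := lt_nat hx hxy
    exact h2 m n hm

theorem P34_coll {a : Tm} (ha : InW a) (h : P34 a) (j : ℕ) (ht : tp a = .psi (j + 1) .zero)
    (ht' : tp (.psi j a) = omegaT)
    (hf : ∀ x, fund (.psi j a) x = .psi j (fund a (zz j a (tmToNat x)))) : P34 (.psi j a) := by
  have hb : ∀ n, TLt (zz j a n) (tp a) := fun n => by rw [ht]; exact zz_lt_tp j n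
  apply P34_of_nat ht'
  · intro n
    rw [hf]
    exact .psi_mono (h.1 _ (zz_G ha j _).1 (hb _))
  · intro m n hmn
    rw [hf, hf, tmToNat_nat, tmToNat_nat]
    exact .psi_mono (h.2 _ _ (zz_G ha j _).1 (zz_G ha j _).1 (zz_mono ha h ht hmn) (hb _))

theorem fund_add {p b : Tm} (hp : p.IsPrincipal) (hpW : InW p) (hb : InW b) (hb0 : b ≠ .zero)
    (hle : TLe b.hd p) {x : Tm} (hx : InW x) (hlt : CLt (fund b x) b) :
    fund (.add p b) x = sm p (fund b x) := by
  rw [fund]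
  exact addT_eq_sm hp (no_discard hp hpW hb hb0 (fund_InW hb x hx) hle hlt)

theorem main34 {a : Tm} (ha : InT a) : P34 a := by
  induction ha with
  | zero => exact ⟨fun x _ h => (not_lt_zero' h).elim, fun x y _ _ _ h => (not_lt_zero' h).elim⟩
  | one =>
    refine ⟨fun x _ h => ?_, fun x y _ hy hxy h => ?_⟩
    · rw [fund]; exact .zero_lt (by simp)
    · have := lt_one h hy.inW
      subst this
      exact (not_lt_zero' hxy).elim
  | @add p b hp hpT hb hb0 hle _ ih =>
    have hbW := InW.of hb
    have hs : Tm.add p b = sm p b := by rw [sm, if_neg hb0]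
    constructor
    · intro x hx h
      have h1 := ih.1 x hx h
      rw [fund_add hp (.of hpT) hbW hb0 hle hx.inW (.of h1 (fund_InW hbW _ hx.inW) hbW), hs]
      exact sm_lt hp h1
    · intro x y hx hy hxy h
      have h1 := CLt.of (ih.1 y hy h) (fund_InW hbW _ hy.inW) hbW
      have h2 := ih.2 x y hx hy hxy h
      have h3 := CLt.of h2 (fund_InW hbW _ hx.inW) (fund_InW hbW _ hy.inW)
      rw [fund_add hp (.of hpT) hbW hb0 hle hx.inW (h3.trans h1),
        fund_add hp (.of hpT) hbW hb0 hle hy.inW h1]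
      exact sm_lt hp h2
  | @psi i a hi ha ih =>
    have haW := InW.of ha
    by_cases c0 : tp a = .zero
    · have e := (tp_zero_iff haW).1 c0
      subst e
      have hf : ∀ x, fund (.psi i .zero) x = x := fun x => by rw [fund, if_pos c0]
      have ht : tp (.psi i .zero) = .psi i .zero := by simp [tp]
      refine ⟨fun x _ h => ?_, fun x y _ _ hxy _ => ?_⟩
      · rw [hf]; rwa [ht] at h
      · rwa [hf, hf]
    by_cases c1 : tp a = .one
    · have hf : ∀ x, fund (.psi i a) x = rep (.psi i (fund a .zero)) (tmToNat x) := fun x => by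
        rw [fund, if_neg c0, if_pos c1, mulNat_eq (pp _ _)]
      have ht : tp (.psi i a) = omegaT := by rw [tp, if_neg c0, if_pos c1]
      have h0 := ih.1 .zero (Or.inl .zero) (by rw [c1]; exact .zero_lt (by simp))
      apply P34_of_nat ht
      · intro n; rw [hf]; exact rep_lt_prin (pp _ _) (pp _ _) (.psi_mono h0) _
      · intro m n hmn
        rw [hf, hf, tmToNat_nat, tmToNat_nat]
        exact rep_lt (pp _ _) hmn
    by_cases c2 : i = 0 ∧ tp a = OmegaT
    · obtain ⟨rfl, c3⟩ := c2
      apply P34_coll haW ih 0 c3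
      · rw [tp, if_neg c0, if_neg c1, if_pos (Or.inl ⟨rfl, c3⟩)]
      · intro x; rw [fund, if_neg c0, if_neg c1, if_pos ⟨rfl, c3⟩]; rfl
    by_cases c3 : i = 1 ∧ tp a = Omega2T
    · obtain ⟨rfl, c4⟩ := c3
      apply P34_coll haW ih 1 c4
      · rw [tp, if_neg c0, if_neg c1, if_pos (Or.inr ⟨rfl, c4⟩)]
      · intro x; rw [fund, if_neg c0, if_neg c1, if_neg c2, if_pos ⟨rfl, c4⟩]; rfl
    have hf : ∀ x, fund (.psi i a) x = .psi i (fund a x) := fun x => by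
      rw [fund, if_neg c0, if_neg c1, if_neg c2, if_neg c3]
    have ht : tp (.psi i a) = tp a := by
      rw [tp, if_neg c0, if_neg c1, if_neg (by tauto)]
    refine ⟨fun x hx h => ?_, fun x y hx hy hxy h => ?_⟩
    · rw [hf]; rw [ht] at h; exact .psi_mono (ih.1 x hx h)
    · rw [hf, hf]; rw [ht] at h; exact .psi_mono (ih.2 x y hx hy hxy h)

theorem main2 {a : Tm} (ha : InT a) : tp a = .one → a = (fund a .zero).addT .one := by
  induction ha with
  | zero => intro h; simp [tp] at h
  | one => intro _; rw [fund]; simp [Tm.addT]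
  | psi hi ha ih =>
    intro h
    simp only [tp] at h
    split_ifs at h
    all_goals first
      | contradiction
      | cases h
  | @add p b hp hpT hb hb0 hle _ ih =>
    intro h
    have h : tp b = .one := h
    have hbW := InW.of hb
    have h1 := (main34 hb).1 .zero (Or.inl .zero) (by rw [h]; exact .zero_lt (by simp))
    have hp1 : ¬ TLt p Tm.one.hd := fun hl => prin_ne hp (lt_one hl (.of hpT))
    rw [fund_add hp (.of hpT) hbW hb0 hle .zero (.of h1 (fund_InW hbW _ .zero) hbW)]
    have ih := ih h
    by_cases h0 : fund b .zero = .zero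
    · rw [h0] at ih
      have : b = .one := by rw [ih]; simp [Tm.addT]
      rw [sm, if_pos h0, addT_eq_sm hp hp1, this, sm, if_neg (by simp)]
    · rw [sm, if_neg h0, addT_add (by simp) hp1, ← ih]

end TFB

/-- Basic properties of `tp` and the fundamental sequences on `T`. -/
theorem tp_fund_basic (a : Tm) (ha : InT a) :
    (tp a = Tm.zero ↔ a = Tm.zero) ∧
    (tp a = Tm.one → a = Tm.addT (fund a Tm.zero) Tm.one) ∧
    (∀ x : Tm, InT x → TLt x (tp a) → TLt (fund a x) a) ∧
    (∀ x y : Tm, InT x → InT y → TLt x y → TLt y (tp a) →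
      TLt (fund a x) (fund a y)) := by
  have h := TFB.main34 ha
  exact ⟨TFB.tp_zero_iff (.of ha), TFB.main2 ha, fun x hx hl => h.1 x (Or.inl hx) hl,
    fun x y hx hy hxy hl => h.2 x y (Or.inl hx) (Or.inl hy) hxy hl⟩
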